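/- There exist a constant C > 0 and an integer N₀ such that for every N ≥ N₀ and every index 0 ≤ j < N: |ρ_j(N)| ≤ C·a^{-(L-j)}/(j+1) if 0 ≤ j < L; |ρ_j(N)| ≤ C/L if L ≤ j < K; and |ρ_j(N)| ≤ C·(1/(N−j) + a^{-(N−j)}) if K ≤ j < N. In particular, ρ_{j(N)}(N) → 0 as N → ∞ for every index sequence j(N) with N − j(N) → ∞. -/

import Mathlib

open Filter Matrix

/-- Hankelization (diagonal averaging): the `j`-th value is the average of the
entries `Y i k` with `i + k = j`. -/
noncomputable def hankelize {L K : ℕ} (Y : Matrix (Fin L) (Fin K) ℝ) (j : ℕ) : ℝ :=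
  (∑ i : Fin L, ∑ k : Fin K, if (i : ℕ) + (k : ℕ) = j then Y i k else 0) /
  (∑ i : Fin L, ∑ k : Fin K, if (i : ℕ) + (k : ℕ) = j then (1 : ℝ) else 0)

/-- The `L × K` Hankel (trajectory) matrix of a series `x`. -/
noncomputable def hankelOf (x : ℕ → ℝ) (L K : ℕ) : Matrix (Fin L) (Fin K) ℝ :=
  Matrix.of fun i k => x ((i : ℕ) + (k : ℕ))

/-- Squared Euclidean norm of a vector. -/
noncomputable def normSq {M : ℕ} (w : Fin M → ℝ) : ℝ := ∑ i, w i ^ 2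

/-- `u` is a unit eigenvector of `A` corresponding to its largest eigenvalue. -/
def IsTopEigenvector {L : ℕ} (A : Matrix (Fin L) (Fin L) ℝ) (u : Fin L → ℝ) : Prop :=
  normSq u = 1 ∧ ∃ μ : ℝ, A.mulVec u = μ • u ∧
    ∀ (ν : ℝ) (v : Fin L → ℝ), v ≠ 0 → A.mulVec v = ν • v → ν ≤ μ

/-- The exponential signal `x_n = a^n`. -/
noncomputable def expSignal (a : ℝ) : ℕ → ℝ := fun n => a ^ n

/-- The harmonic noise `e_n = cos (ξ n + φ)`. -/
noncomputable def cosNoise (ξ φ : ℝ) : ℕ → ℝ := fun n => Real.cos (ξ * (n : ℝ) + φ)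

/-- The vector `W_M = (1, a, …, a^{M-1})ᵀ`. -/
noncomputable def Wvec (a : ℝ) (M : ℕ) : Fin M → ℝ := fun i => a ^ (i : ℕ)

/-- `ρ_j = (𝒮(P₀ E Hᵀ S₀ H))_j + (𝒮(P₀⊥ E))_j`. -/
noncomputable def rho (a ξ φ : ℝ) (L K : ℕ) (j : ℕ) : ℝ :=
  let H := hankelOf (expSignal a) L K
  let E := hankelOf (cosNoise ξ φ) L K
  let P0perp : Matrix (Fin L) (Fin L) ℝ :=
    (normSq (Wvec a L))⁻¹ • Matrix.vecMulVec (Wvec a L) (Wvec a L)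
  let P0 : Matrix (Fin L) (Fin L) ℝ := 1 - P0perp
  let S0 : Matrix (Fin L) (Fin L) ℝ :=
    ((normSq (Wvec a L)) ^ 2 * normSq (Wvec a K))⁻¹ • Matrix.vecMulVec (Wvec a L) (Wvec a L)
  hankelize (P0 * E * Hᵀ * S0 * H) j + hankelize (P0perp * E) j

/-- The matrix `H(δ)H(δ)ᵀ` for the perturbed series `a^n + δ cos(ξ n + φ)`. -/
noncomputable def HdeltaSq (a ξ φ δ : ℝ) (L K : ℕ) : Matrix (Fin L) (Fin L) ℝ :=
  let Hδ := hankelOf (expSignal a) L K + δ • hankelOf (cosNoise ξ φ) L K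
  Hδ * Hδᵀ

/-- The SSA reconstruction error `r_j = (𝒮(u uᵀ H(δ)))_j - a^j`. -/
noncomputable def recErr (a ξ φ δ : ℝ) (L K : ℕ) (u : Fin L → ℝ) (j : ℕ) : ℝ :=
  hankelize (Matrix.vecMulVec u u *
    (hankelOf (expSignal a) L K + δ • hankelOf (cosNoise ξ φ) L K)) j - a ^ j

/-!
Since `H = W_L W_Kᵀ`, the matrix averaged in `ρ_j` is
`‖W_K‖⁻² (E W_K) W_Kᵀ + ‖W_L‖⁻² W_L (Eᵀ W_L)ᵀ - ‖W_L‖⁻² ‖W_K‖⁻² ⟨W_L, E W_K⟩ H`.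
If the entries of `E` are bounded, those of `E W_K` and `Eᵀ W_L` are `O(a^K)` and `O(a^L)`, while
`‖W_M‖²` is of order `a^(2M)`. A geometric sum along the `j`-th antidiagonal therefore bounds the
averages of the first two terms by `O(a^(min (j+1) M - M))`, `M = K, L`, divided by the length of
that antidiagonal; the third term contributes `O(a^(j - L - K))`.
-/

open scoped Finset

section DiagonalAveraging

variable {L K : ℕ}

/-- The positions `(i, k)` of an `L × K` matrix with `i + k = j`, that is, the antidiagonal over
which `hankelize` averages. -/
def antidiagonalIndices (L K j : ℕ) : Finset (Fin L × Fin K) :=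
  {p | (p.1 : ℕ) + (p.2 : ℕ) = j}

lemma mem_antidiagonalIndices {j : ℕ} {p : Fin L × Fin K} :
    p ∈ antidiagonalIndices L K j ↔ (p.1 : ℕ) + (p.2 : ℕ) = j := by
  simp [antidiagonalIndices]

lemma injOn_fst_antidiagonalIndices (L K j : ℕ) :
    Set.InjOn (fun p : Fin L × Fin K => (p.1 : ℕ)) (antidiagonalIndices L K j) := by
  intro p hp q hq hpq
  rw [Finset.mem_coe, mem_antidiagonalIndices] at hp hq
  dsimp only at hpq
  ext <;> omega

lemma injOn_snd_antidiagonalIndices (L K j : ℕ) :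
    Set.InjOn (fun p : Fin L × Fin K => (p.2 : ℕ)) (antidiagonalIndices L K j) := by
  intro p hp q hq hpq
  rw [Finset.mem_coe, mem_antidiagonalIndices] at hp hq
  dsimp only at hpq
  ext <;> omega

lemma card_antidiagonalIndices (L K j : ℕ) :
    #(antidiagonalIndices L K j) = min (j + 1) L - (j + 1 - K) := by
  have himage : (antidiagonalIndices L K j).image (fun p => (p.1 : ℕ)) =
      Finset.Ico (j + 1 - K) (min (j + 1) L) := by
    ext i
    simp only [Finset.mem_image, mem_antidiagonalIndices, Finset.mem_Ico]
    constructor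
    · rintro ⟨p, hp, rfl⟩
      omega
    · intro hi
      exact ⟨(⟨i, by omega⟩, ⟨j - i, by omega⟩), by dsimp only; omega, rfl⟩
  rw [← Finset.card_image_of_injOn (injOn_fst_antidiagonalIndices L K j), himage, Nat.card_Ico]

lemma card_antidiagonalIndices_comm (L K j : ℕ) :
    #(antidiagonalIndices L K j) = #(antidiagonalIndices K L j) := by
  simp only [card_antidiagonalIndices]
  omega

lemma sum_antidiagonalIndices_snd_le {f : ℕ → ℝ} (hf : ∀ k, 0 ≤ f k) (L K j : ℕ) :
    ∑ p ∈ antidiagonalIndices L K j, f p.2 ≤ ∑ k ∈ Finset.range (min (j + 1) K), f k := by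
  rw [← Finset.sum_image (f := f) (injOn_snd_antidiagonalIndices L K j)]
  refine Finset.sum_le_sum_of_subset_of_nonneg (fun k hk => ?_) fun k _ _ => hf k
  obtain ⟨p, hp, rfl⟩ := Finset.mem_image.1 hk
  rw [mem_antidiagonalIndices] at hp
  rw [Finset.mem_range]
  omega

lemma hankelize_eq_sum_div_card (Y : Matrix (Fin L) (Fin K) ℝ) (j : ℕ) :
    hankelize Y j =
      (∑ p ∈ antidiagonalIndices L K j, Y p.1 p.2) / #(antidiagonalIndices L K j) := by
  simp only [hankelize, antidiagonalIndices, Finset.card_filter, Finset.sum_filter,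
    Fintype.sum_prod_type, Nat.cast_sum, Nat.cast_ite, Nat.cast_one, Nat.cast_zero]

lemma hankelize_smul (c : ℝ) (Y : Matrix (Fin L) (Fin K) ℝ) (j : ℕ) :
    hankelize (c • Y) j = c * hankelize Y j := by
  simp only [hankelize_eq_sum_div_card, Matrix.smul_apply, smul_eq_mul, ← Finset.mul_sum,
    mul_div_assoc]

lemma hankelize_sub (X Y : Matrix (Fin L) (Fin K) ℝ) (j : ℕ) :
    hankelize (X - Y) j = hankelize X j - hankelize Y j := by
  simp only [hankelize_eq_sum_div_card, Matrix.sub_apply, Finset.sum_sub_distrib, sub_div]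

lemma hankelize_transpose (Y : Matrix (Fin L) (Fin K) ℝ) (j : ℕ) :
    hankelize Yᵀ j = hankelize Y j := by
  simp only [hankelize, Matrix.transpose_apply]
  rw [Finset.sum_comm, Finset.sum_comm (s := (Finset.univ : Finset (Fin K)))]
  simp only [add_comm]

lemma hankelize_hankelOf (x : ℕ → ℝ) {j : ℕ} (hL : 0 < L) (hK : 0 < K) (hj : j + 1 < L + K) :
    hankelize (hankelOf x L K) j = x j := by
  have hcard : (#(antidiagonalIndices L K j) : ℝ) ≠ 0 := by
    rw [Nat.cast_ne_zero, card_antidiagonalIndices]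
    omega
  have hconst : ∀ p ∈ antidiagonalIndices L K j, hankelOf x L K p.1 p.2 = x j := by
    intro p hp
    rw [← mem_antidiagonalIndices.1 hp]
    rfl
  rw [hankelize_eq_sum_div_card, Finset.sum_congr rfl hconst, Finset.sum_const, nsmul_eq_mul,
    mul_div_cancel_left₀ _ hcard]

end DiagonalAveraging

section GeometricVector

variable {a : ℝ}

lemma geom_sum_le_pow_div (ha : 1 < a) (n : ℕ) :
    ∑ i ∈ Finset.range n, a ^ i ≤ a ^ n / (a - 1) := by
  have : 0 < a - 1 := sub_pos.2 ha
  rw [geom_sum_eq ha.ne']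
  gcongr
  exact sub_le_self _ zero_le_one

lemma one_le_div_sub_one (ha : 1 < a) : 1 ≤ a / (a - 1) :=
  (one_le_div (sub_pos.2 ha)).2 (sub_le_self a zero_le_one)

lemma natCast_add_one_le_mul_pow (ha : 1 < a) (n : ℕ) : (n : ℝ) + 1 ≤ a / (a - 1) * a ^ n := by
  have hpos : 0 < a - 1 := sub_pos.2 ha
  have bernoulli : 1 + n * (a - 1) ≤ a ^ n := one_add_mul_sub_le_pow (by linarith) n
  have hone : 1 ≤ a ^ n := one_le_pow₀ ha.le
  rw [div_mul_eq_mul_div, le_div_iff₀ hpos]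
  nlinarith

lemma pow_div_pow_le_div_sub_add_one (ha : 1 < a) {j M : ℕ} (hjM : j ≤ M) :
    a ^ j / a ^ M ≤ a / (a - 1) / ((M : ℝ) - j + 1) := by
  have hpos : 0 < a := zero_lt_one.trans ha
  obtain ⟨n, rfl⟩ := Nat.exists_eq_add_of_le hjM
  have hn : (0 : ℝ) < n + 1 := by positivity
  rw [Nat.cast_add, add_sub_cancel_left, le_div_iff₀ hn, pow_add, div_mul_eq_mul_div,
    div_le_iff₀ (by positivity)]
  linarith [mul_le_mul_of_nonneg_left (natCast_add_one_le_mul_pow ha n) (pow_pos hpos j).le]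

lemma pow_div_pow_div_add_one_le (ha : 1 < a) {j M : ℕ} (hjM : j < M) :
    a ^ j / a ^ M / ((j : ℝ) + 1) ≤ a / (a - 1) / M := by
  have : 0 < a - 1 := sub_pos.2 ha
  have hjM' : (j : ℝ) < M := Nat.cast_lt.2 hjM
  have hMprod : (M : ℝ) ≤ (M - j + 1) * (j + 1) := by
    nlinarith [mul_nonneg j.cast_nonneg (sub_nonneg.2 hjM'.le)]
  calc a ^ j / a ^ M / ((j : ℝ) + 1) ≤ a / (a - 1) / ((M : ℝ) - j + 1) / (j + 1) :=
        div_le_div_of_nonneg_right (pow_div_pow_le_div_sub_add_one ha hjM.le) (by positivity)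
    _ = a / (a - 1) / ((M - j + 1) * (j + 1)) := div_div _ _ _
    _ ≤ a / (a - 1) / M := by
      gcongr
      linarith

lemma normSq_Wvec_pos (a : ℝ) {M : ℕ} (hM : 0 < M) : 0 < normSq (Wvec a M) :=
  Finset.sum_pos' (fun _ _ => sq_nonneg _) ⟨⟨0, hM⟩, Finset.mem_univ _, by simp [Wvec]⟩

lemma inv_normSq_Wvec_le (ha : 0 < a) {M : ℕ} (hM : 0 < M) :
    (normSq (Wvec a M))⁻¹ ≤ a ^ 2 / (a ^ M) ^ 2 := by
  obtain ⟨n, rfl⟩ := Nat.exists_eq_succ_of_ne_zero hM.ne'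
  have hlast : (a ^ n) ^ 2 ≤ normSq (Wvec a (n + 1)) :=
    Finset.single_le_sum (f := fun i => Wvec a (n + 1) i ^ 2) (fun _ _ => sq_nonneg _)
      (Finset.mem_univ (Fin.last n))
  calc (normSq (Wvec a (n + 1)))⁻¹ ≤ ((a ^ n) ^ 2)⁻¹ := inv_anti₀ (by positivity) hlast
    _ = a ^ 2 / (a ^ (n + 1)) ^ 2 := by
      field_simp
      ring

lemma abs_dotProduct_Wvec_le (ha : 1 < a) {M : ℕ} {u : Fin M → ℝ} {c : ℝ} (hc : 0 ≤ c)
    (hu : ∀ i, |u i| ≤ c) : |u ⬝ᵥ Wvec a M| ≤ c * (a ^ M / (a - 1)) := by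
  have hW : ∀ i, 0 ≤ Wvec a M i := fun i => pow_nonneg (zero_le_one.trans ha.le) _
  calc |u ⬝ᵥ Wvec a M| ≤ ∑ i, |u i * Wvec a M i| := Finset.abs_sum_le_sum_abs _ _
    _ ≤ ∑ i, c * Wvec a M i := by
      gcongr with i
      rw [abs_mul, abs_of_nonneg (hW i)]
      exact mul_le_mul_of_nonneg_right (hu i) (hW i)
    _ = c * ∑ i ∈ Finset.range M, a ^ i := by
      rw [← Finset.mul_sum, ← Fin.sum_univ_eq_sum_range]
      rfl
    _ ≤ c * (a ^ M / (a - 1)) := mul_le_mul_of_nonneg_left (geom_sum_le_pow_div ha M) hc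

variable {L K : ℕ}

lemma hankelOf_expSignal (a : ℝ) (L K : ℕ) :
    hankelOf (expSignal a) L K = vecMulVec (Wvec a L) (Wvec a K) := by
  ext i k
  simp [hankelOf, expSignal, vecMulVec_apply, Wvec, pow_add]

lemma abs_hankelize_vecMulVec_Wvec_le (ha : 1 < a) {u : Fin L → ℝ} {c : ℝ} (hc : 0 ≤ c)
    (hu : ∀ i, |u i| ≤ c) (j : ℕ) :
    |hankelize (vecMulVec u (Wvec a K)) j| ≤
      c * (a ^ min (j + 1) K / (a - 1)) / #(antidiagonalIndices L K j) := by
  have hpow : ∀ k : ℕ, 0 ≤ a ^ k := fun k => pow_nonneg (zero_le_one.trans ha.le) k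
  rw [hankelize_eq_sum_div_card, abs_div, Nat.abs_cast]
  refine div_le_div_of_nonneg_right ?_ (Nat.cast_nonneg _)
  calc |∑ p ∈ antidiagonalIndices L K j, vecMulVec u (Wvec a K) p.1 p.2|
      ≤ ∑ p ∈ antidiagonalIndices L K j, |vecMulVec u (Wvec a K) p.1 p.2| :=
        Finset.abs_sum_le_sum_abs _ _
    _ ≤ ∑ p ∈ antidiagonalIndices L K j, c * a ^ (p.2 : ℕ) := by
      gcongr with p
      rw [vecMulVec_apply, abs_mul, Wvec, abs_of_nonneg (hpow _)]
      exact mul_le_mul_of_nonneg_right (hu _) (hpow _)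
    _ ≤ c * (a ^ min (j + 1) K / (a - 1)) := by
      rw [← Finset.mul_sum]
      exact mul_le_mul_of_nonneg_left
        ((sum_antidiagonalIndices_snd_le hpow L K j).trans (geom_sum_le_pow_div ha _)) hc

end GeometricVector

section Rho

variable {a b : ℝ} {L K N j : ℕ} {E : Matrix (Fin L) (Fin K) ℝ}

/-- `ρ_j` for an arbitrary noise matrix `E`, not necessarily Hankel, in place of the trajectory
matrix of `cosNoise ξ φ`. -/
noncomputable def rhoOf (a : ℝ) {L K : ℕ} (E : Matrix (Fin L) (Fin K) ℝ) (j : ℕ) : ℝ :=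
  let H := hankelOf (expSignal a) L K
  let P0perp : Matrix (Fin L) (Fin L) ℝ :=
    (normSq (Wvec a L))⁻¹ • Matrix.vecMulVec (Wvec a L) (Wvec a L)
  let P0 : Matrix (Fin L) (Fin L) ℝ := 1 - P0perp
  let S0 : Matrix (Fin L) (Fin L) ℝ :=
    ((normSq (Wvec a L)) ^ 2 * normSq (Wvec a K))⁻¹ • Matrix.vecMulVec (Wvec a L) (Wvec a L)
  hankelize (P0 * E * Hᵀ * S0 * H) j + hankelize (P0perp * E) j

lemma vecMulVec_mul_smul_mul_vecMulVec {m n : ℕ} {w : Fin m → ℝ} (hw : normSq w ≠ 0)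
    (v : Fin n → ℝ) (c : ℝ) :
    vecMulVec v w * ((normSq w ^ 2 * c)⁻¹ • vecMulVec w w) * vecMulVec w v =
      c⁻¹ • vecMulVec v v := by
  have hdot : w ⬝ᵥ w = normSq w := by simp [dotProduct, normSq, sq]
  simp only [Matrix.mul_smul, Matrix.smul_mul, vecMulVec_mul_vecMulVec, hdot, vecMulVec_smul,
    smul_smul]
  congr 1
  field_simp

lemma rhoOf_eq (a : ℝ) (E : Matrix (Fin L) (Fin K) ℝ) (hL : 0 < L) (hK : 0 < K)
    (hj : j + 1 < L + K) :
    rhoOf a E j =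
      (normSq (Wvec a K))⁻¹ * hankelize (vecMulVec (E *ᵥ Wvec a K) (Wvec a K)) j +
      (normSq (Wvec a L))⁻¹ * hankelize (vecMulVec (Wvec a L) (Wvec a L ᵥ* E)) j -
      (normSq (Wvec a K))⁻¹ * (normSq (Wvec a L))⁻¹ * ((E *ᵥ Wvec a K) ⬝ᵥ Wvec a L) * a ^ j := by
  have hdiag : hankelize (vecMulVec (Wvec a L) (Wvec a K)) j = a ^ j := by
    rw [← hankelOf_expSignal, hankelize_hankelOf _ hL hK hj, expSignal]
  have hproj :
      (1 - (normSq (Wvec a L))⁻¹ • vecMulVec (Wvec a L) (Wvec a L)) * E *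
          ((normSq (Wvec a K))⁻¹ • vecMulVec (Wvec a K) (Wvec a K)) =
        (normSq (Wvec a K))⁻¹ • (vecMulVec (E *ᵥ Wvec a K) (Wvec a K) -
          ((normSq (Wvec a L))⁻¹ * ((E *ᵥ Wvec a K) ⬝ᵥ Wvec a L)) •
            vecMulVec (Wvec a L) (Wvec a K)) := by
    rw [Matrix.mul_smul, Matrix.mul_assoc, mul_vecMulVec, Matrix.sub_mul, Matrix.one_mul,
      Matrix.smul_mul, vecMulVec_mul_vecMulVec, vecMulVec_smul, smul_smul, dotProduct_comm]
  dsimp only [rhoOf]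
  rw [hankelOf_expSignal, transpose_vecMulVec, Matrix.mul_assoc, Matrix.mul_assoc,
    ← Matrix.mul_assoc (vecMulVec _ _), vecMulVec_mul_smul_mul_vecMulVec (normSq_Wvec_pos a hL).ne',
    hproj, Matrix.smul_mul, vecMulVec_mul]
  simp only [hankelize_smul, hankelize_sub, hdiag]
  ring

lemma abs_inv_normSq_mul_hankelize_mulVec_le (ha : 1 < a) (hK : 0 < K) (hb : 0 ≤ b)
    (hE : ∀ i k, |E i k| ≤ b) (j : ℕ) :
    |(normSq (Wvec a K))⁻¹ * hankelize (vecMulVec (E *ᵥ Wvec a K) (Wvec a K)) j| ≤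
      b * ((a / (a - 1)) ^ 2 * (a ^ min (j + 1) K / a ^ K) / #(antidiagonalIndices L K j)) := by
  have ha0 : 0 < a := zero_lt_one.trans ha
  have ha1 : 0 < a - 1 := sub_pos.2 ha
  have hEW : ∀ i, |(E *ᵥ Wvec a K) i| ≤ b * (a ^ K / (a - 1)) := fun i =>
    abs_dotProduct_Wvec_le ha hb (hE i)
  rw [abs_mul, abs_of_pos (inv_pos.2 (normSq_Wvec_pos a hK))]
  calc _ ≤ a ^ 2 / (a ^ K) ^ 2 * (b * (a ^ K / (a - 1)) * (a ^ min (j + 1) K / (a - 1)) /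
            #(antidiagonalIndices L K j)) := by
        gcongr
        · exact inv_normSq_Wvec_le ha0 hK
        · exact abs_hankelize_vecMulVec_Wvec_le ha (by positivity) hEW j
    _ = _ := by field_simp

lemma abs_inv_normSq_mul_hankelize_vecMul_le (ha : 1 < a) (hL : 0 < L) (hb : 0 ≤ b)
    (hE : ∀ i k, |E i k| ≤ b) (j : ℕ) :
    |(normSq (Wvec a L))⁻¹ * hankelize (vecMulVec (Wvec a L) (Wvec a L ᵥ* E)) j| ≤
      b * ((a / (a - 1)) ^ 2 * (a ^ min (j + 1) L / a ^ L) / #(antidiagonalIndices L K j)) := by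
  rw [← hankelize_transpose, transpose_vecMulVec, ← mulVec_transpose,
    card_antidiagonalIndices_comm]
  exact abs_inv_normSq_mul_hankelize_mulVec_le ha hL hb (fun i k => hE k i) j

lemma abs_inv_normSq_mul_dotProduct_mul_pow_le (ha : 1 < a) (hL : 0 < L) (hK : 0 < K) (hb : 0 ≤ b)
    (hE : ∀ i k, |E i k| ≤ b) (j : ℕ) :
    |(normSq (Wvec a K))⁻¹ * (normSq (Wvec a L))⁻¹ * ((E *ᵥ Wvec a K) ⬝ᵥ Wvec a L) * a ^ j| ≤
      b * (a ^ 2 * (a / (a - 1)) ^ 2 * (a ^ j / a ^ (L + K))) := by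
  have ha0 : 0 < a := zero_lt_one.trans ha
  have ha1 : 0 < a - 1 := sub_pos.2 ha
  have hEW : ∀ i, |(E *ᵥ Wvec a K) i| ≤ b * (a ^ K / (a - 1)) := fun i =>
    abs_dotProduct_Wvec_le ha hb (hE i)
  rw [abs_mul, abs_mul, abs_mul, abs_of_pos (inv_pos.2 (normSq_Wvec_pos a hK)),
    abs_of_pos (inv_pos.2 (normSq_Wvec_pos a hL)), abs_of_pos (pow_pos ha0 j)]
  calc _ ≤ a ^ 2 / (a ^ K) ^ 2 * (a ^ 2 / (a ^ L) ^ 2) *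
            (b * (a ^ K / (a - 1)) * (a ^ L / (a - 1))) * a ^ j := by
        gcongr
        · exact (inv_pos.2 (normSq_Wvec_pos a hL)).le
        · exact inv_normSq_Wvec_le ha0 hK
        · exact inv_normSq_Wvec_le ha0 hL
        · exact abs_dotProduct_Wvec_le ha (by positivity) hEW
    _ = _ := by
      rw [pow_add]
      field_simp

lemma abs_rhoOf_le (ha : 1 < a) (hL : 0 < L) (hK : 0 < K) (hj : j + 1 < L + K)
    (hE : ∀ i k, |E i k| ≤ b) :
    |rhoOf a E j| ≤
      b * ((a / (a - 1)) ^ 2 * (a ^ min (j + 1) K / a ^ K + a ^ min (j + 1) L / a ^ L) /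
          #(antidiagonalIndices L K j) +
        a ^ 2 * (a / (a - 1)) ^ 2 * (a ^ j / a ^ (L + K))) := by
  have hb : 0 ≤ b := (abs_nonneg _).trans (hE ⟨0, hL⟩ ⟨0, hK⟩)
  rw [rhoOf_eq a E hL hK hj, mul_add ((a / (a - 1)) ^ 2), add_div, mul_add, mul_add]
  exact (abs_sub _ _).trans (add_le_add ((abs_add_le _ _).trans (add_le_add
    (abs_inv_normSq_mul_hankelize_mulVec_le ha hK hb hE j)
    (abs_inv_normSq_mul_hankelize_vecMul_le ha hL hb hE j)))
    (abs_inv_normSq_mul_dotProduct_mul_pow_le ha hL hK hb hE j))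

/-- A constant `C` for which the bounds on `ρ_j` hold when the noise is bounded by `1`. It dominates
`2 a q² + a² q³` with `q = a / (a - 1)`, the contribution of the two averaged terms plus that of the
multiple of `H`. -/
noncomputable def rhoConst (a : ℝ) : ℝ := 3 * a ^ 2 * (a / (a - 1)) ^ 3

lemma rhoConst_pos (ha : 1 < a) : 0 < rhoConst a := by
  have : 0 < a - 1 := sub_pos.2 ha
  unfold rhoConst
  positivity

lemma two_mul_add_le_rhoConst (ha : 1 < a) :
    2 * a * (a / (a - 1)) ^ 2 + a ^ 2 * (a / (a - 1)) ^ 3 ≤ rhoConst a := by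
  have hq : 1 ≤ a / (a - 1) := one_le_div_sub_one ha
  have : a * (a / (a - 1)) ^ 2 ≤ a ^ 2 * (a / (a - 1)) ^ 3 :=
    mul_le_mul (le_self_pow₀ ha.le two_ne_zero) (pow_le_pow_right₀ hq (by norm_num))
      (sq_nonneg _) (sq_nonneg a)
  unfold rhoConst
  linarith

lemma abs_rhoOf_le_rhoConst_mul_div_card (ha : 1 < a) (hL : 0 < L) (hK : 0 < K)
    (hj : j + 1 < L + K) (hE : ∀ i k, |E i k| ≤ b) {x : ℝ}
    (hxK : a ^ min (j + 1) K / a ^ K ≤ a * x) (hxL : a ^ min (j + 1) L / a ^ L ≤ a * x)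
    (hxj : a ^ j / a ^ (L + K) ≤ a / (a - 1) * x / #(antidiagonalIndices L K j)) :
    |rhoOf a E j| ≤ b * rhoConst a * x / #(antidiagonalIndices L K j) := by
  have ha0 : 0 < a := zero_lt_one.trans ha
  have hb : 0 ≤ b := (abs_nonneg _).trans (hE ⟨0, hL⟩ ⟨0, hK⟩)
  have hx : 0 ≤ x := nonneg_of_mul_nonneg_right ((by positivity : (0 : ℝ) ≤ _).trans hxK) ha0
  calc |rhoOf a E j| ≤ _ := abs_rhoOf_le ha hL hK hj hE
    _ ≤ b * ((a / (a - 1)) ^ 2 * (a * x + a * x) / #(antidiagonalIndices L K j) +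
          a ^ 2 * (a / (a - 1)) ^ 2 * (a / (a - 1) * x / #(antidiagonalIndices L K j))) := by
      gcongr
    _ = b * (2 * a * (a / (a - 1)) ^ 2 + a ^ 2 * (a / (a - 1)) ^ 3) * x /
          #(antidiagonalIndices L K j) := by ring
    _ ≤ b * rhoConst a * x / #(antidiagonalIndices L K j) := by
      gcongr
      exact two_mul_add_le_rhoConst ha

lemma abs_rhoOf_le_rhoConst_div_card (ha : 1 < a) (hL : 0 < L) (hK : 0 < K) (hj : j + 1 < L + K)
    (hE : ∀ i k, |E i k| ≤ b) :
    |rhoOf a E j| ≤ b * rhoConst a / #(antidiagonalIndices L K j) := by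
  have hratio : ∀ M, a ^ min (j + 1) M / a ^ M ≤ a * 1 := fun M =>
    (div_le_one_of_le₀ (pow_le_pow_right₀ ha.le (min_le_right _ _)) (by positivity)).trans
      (by linarith)
  have hcard : 0 < #(antidiagonalIndices L K j) ∧ #(antidiagonalIndices L K j) + j ≤ L + K := by
    rw [card_antidiagonalIndices]
    omega
  have hcard_pos : (0 : ℝ) < #(antidiagonalIndices L K j) := Nat.cast_pos.2 hcard.1
  have hcard_le : (#(antidiagonalIndices L K j) : ℝ) + j ≤ ((L + K : ℕ) : ℝ) := by
    exact_mod_cast hcard.2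
  have hdecay : a ^ j / a ^ (L + K) ≤ a / (a - 1) * 1 / #(antidiagonalIndices L K j) := by
    refine (pow_div_pow_le_div_sub_add_one ha (by omega)).trans ?_
    have : 0 < a - 1 := sub_pos.2 ha
    rw [mul_one]
    gcongr
    linarith
  simpa only [mul_one] using
    abs_rhoOf_le_rhoConst_mul_div_card ha hL hK hj hE (hratio K) (hratio L) hdecay

lemma abs_rhoOf_le_of_lt (ha : 1 < a) (hLK : L ≤ K) (hjL : j < L) (hE : ∀ i k, |E i k| ≤ b) :
    |rhoOf a E j| ≤ b * rhoConst a * (a ^ j / a ^ L) / ((j : ℝ) + 1) := by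
  have : 0 < a := zero_lt_one.trans ha
  have ha1 : 0 < a - 1 := sub_pos.2 ha
  have hcard : #(antidiagonalIndices L K j) = j + 1 := by
    rw [card_antidiagonalIndices]
    omega
  have hratio : ∀ M, L ≤ M → a ^ min (j + 1) M / a ^ M ≤ a * (a ^ j / a ^ L) := by
    intro M hM
    rw [min_eq_left (by omega), pow_succ', mul_div_assoc]
    gcongr
    exact ha.le
  have hdecay : a ^ j / a ^ (L + K) ≤ a / (a - 1) * (a ^ j / a ^ L) / ((j + 1 : ℕ) : ℝ) := by
    have hjK : ((j + 1 : ℕ) : ℝ) ≤ a / (a - 1) * a ^ K :=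
      (by exact_mod_cast (by omega : j + 1 ≤ K + 1) : ((j + 1 : ℕ) : ℝ) ≤ K + 1).trans
        (natCast_add_one_le_mul_pow ha K)
    rw [le_div_iff₀ (by positivity)]
    calc a ^ j / a ^ (L + K) * ((j + 1 : ℕ) : ℝ)
        ≤ a ^ j / a ^ (L + K) * (a / (a - 1) * a ^ K) := by gcongr
      _ = a / (a - 1) * (a ^ j / a ^ L) := by
        rw [pow_add]
        field_simp
  have hbound := abs_rhoOf_le_rhoConst_mul_div_card ha (by omega) (by omega) (by omega) hE
    (hratio K hLK) (hratio L le_rfl) (by rwa [hcard])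
  rwa [hcard, Nat.cast_add_one] at hbound

lemma abs_rhoOf_le_of_le_of_lt (ha : 1 < a) (hL : 0 < L) (hLj : L ≤ j) (hjK : j < K)
    (hE : ∀ i k, |E i k| ≤ b) : |rhoOf a E j| ≤ b * rhoConst a / L := by
  have hcard : #(antidiagonalIndices L K j) = L := by
    rw [card_antidiagonalIndices]
    omega
  have hbound := abs_rhoOf_le_rhoConst_div_card (j := j) ha hL (by omega) (by omega) hE
  rwa [hcard] at hbound

lemma abs_rhoOf_le_of_ge (ha : 1 < a) (hLK : L ≤ K) (hN : L + K = N + 1) (hKj : K ≤ j)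
    (hjN : j < N) (hE : ∀ i k, |E i k| ≤ b) :
    |rhoOf a E j| ≤ b * rhoConst a / ((N : ℝ) - j) := by
  have hcard : #(antidiagonalIndices L K j) = N - j := by
    rw [card_antidiagonalIndices]
    omega
  have hbound := abs_rhoOf_le_rhoConst_div_card (j := j) ha (by omega) (by omega) (by omega) hE
  rwa [hcard, Nat.cast_sub hjN.le] at hbound

lemma abs_rhoOf_le_one_div_add_one_div (ha : 1 < a) (hL : 0 < L) (hLK : L ≤ K)
    (hN : L + K = N + 1) (hjN : j < N) (hE : ∀ i k, |E i k| ≤ b) :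
    |rhoOf a E j| ≤
      b * rhoConst a * (a / (a - 1)) * (1 / (L : ℝ) + 1 / ((N : ℝ) - j)) := by
  have hb : 0 ≤ b := (abs_nonneg _).trans (hE ⟨0, hL⟩ ⟨0, by omega⟩)
  have hC : 0 ≤ b * rhoConst a := mul_nonneg hb (rhoConst_pos ha).le
  have hq : 1 ≤ a / (a - 1) := one_le_div_sub_one ha
  have hCq : b * rhoConst a ≤ b * rhoConst a * (a / (a - 1)) := le_mul_of_one_le_right hC hq
  have hL0 : 0 ≤ 1 / (L : ℝ) := by positivity
  have hN0 : 0 ≤ 1 / ((N : ℝ) - j) := one_div_nonneg.2 (sub_nonneg.2 (Nat.cast_le.2 hjN.le))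
  have hCq0 := hC.trans hCq
  rcases lt_or_ge j L with hjL | hLj
  · calc |rhoOf a E j| ≤ b * rhoConst a * (a ^ j / a ^ L) / ((j : ℝ) + 1) :=
          abs_rhoOf_le_of_lt ha hLK hjL hE
      _ ≤ b * rhoConst a * (a / (a - 1) / L) := by
        rw [mul_div_assoc]
        exact mul_le_mul_of_nonneg_left (pow_div_pow_div_add_one_le ha hjL) hC
      _ = b * rhoConst a * (a / (a - 1)) * (1 / (L : ℝ)) := by ring
      _ ≤ _ := mul_le_mul_of_nonneg_left (le_add_of_nonneg_right hN0) hCq0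
  rcases lt_or_ge j K with hjK | hKj
  · calc |rhoOf a E j| ≤ b * rhoConst a / L := abs_rhoOf_le_of_le_of_lt ha hL hLj hjK hE
      _ = b * rhoConst a * (1 / L) := div_eq_mul_one_div _ _
      _ ≤ _ := mul_le_mul hCq (le_add_of_nonneg_right hN0) hL0 hCq0
  · calc |rhoOf a E j| ≤ b * rhoConst a / ((N : ℝ) - j) :=
          abs_rhoOf_le_of_ge ha hLK hN hKj hjN hE
      _ = b * rhoConst a * (1 / ((N : ℝ) - j)) := div_eq_mul_one_div _ _
      _ ≤ _ := mul_le_mul hCq (le_add_of_nonneg_left hL0) hN0 hCq0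

lemma rho_eq_rhoOf (a ξ φ : ℝ) (L K j : ℕ) :
    rho a ξ φ L K j = rhoOf a (hankelOf (cosNoise ξ φ) L K) j := rfl

lemma abs_hankelOf_cosNoise_le_one (ξ φ : ℝ) (i : Fin L) (k : Fin K) :
    |hankelOf (cosNoise ξ φ) L K i k| ≤ 1 :=
  Real.abs_cos_le_one _

end Rho

section Asymptotics

variable {a b : ℝ} {L K : ℕ → ℕ} {N₀ : ℕ} {E : ∀ N, Matrix (Fin (L N)) (Fin (K N)) ℝ}

lemma tendsto_atTop_of_tendsto_div_pos {ι : Type*} {l : Filter ι} {f g : ι → ℝ} {c : ℝ}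
    (hc : 0 < c) (hfg : Tendsto (fun i => f i / g i) l (nhds c)) (hg : Tendsto g l atTop) :
    Tendsto f l atTop := by
  refine (hfg.pos_mul_atTop hc hg).congr' ?_
  filter_upwards [hg.eventually_ne_atTop 0] with i hi
  exact div_mul_cancel₀ _ hi

lemma tendsto_rhoOf_zero (ha : 1 < a)
    (hLK : ∀ N, N₀ ≤ N → 0 < L N ∧ L N ≤ K N ∧ L N + K N = N + 1)
    (hE : ∀ N i k, |E N i k| ≤ b) (hL : Tendsto (fun N => (L N : ℝ)) atTop atTop) {j : ℕ → ℕ}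
    (hj : Tendsto (fun N : ℕ => (N : ℝ) - (j N : ℝ)) atTop atTop) :
    Tendsto (fun N => rhoOf a (E N) (j N)) atTop (nhds 0) := by
  have hbound : Tendsto (fun N : ℕ => b * rhoConst a * (a / (a - 1)) *
      (1 / (L N : ℝ) + 1 / ((N : ℝ) - j N))) atTop (nhds 0) := by
    simpa using ((hL.const_div_atTop 1).add (hj.const_div_atTop 1)).const_mul
      (b * rhoConst a * (a / (a - 1)))
  refine squeeze_zero_norm' ?_ hbound
  filter_upwards [eventually_ge_atTop N₀, hj.eventually_gt_atTop 0] with N hN hjN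
  obtain ⟨hLpos, hle, hsum⟩ := hLK N hN
  exact abs_rhoOf_le_one_div_add_one_div ha hLpos hle hsum (Nat.cast_lt.1 (sub_pos.1 hjN)) (hE N)

theorem stmt_0_general (ha : 1 < a) (hb : 0 < b)
    (hLK : ∀ N, N₀ ≤ N → 0 < L N ∧ L N ≤ K N ∧ L N + K N = N + 1)
    (hE : ∀ N i k, |E N i k| ≤ b) :
    (∃ C > (0 : ℝ), ∀ N, N₀ ≤ N → ∀ j, j < N →
      (j < L N →
        |rhoOf a (E N) j| ≤ C * a ^ (-((L N : ℝ) - (j : ℝ))) / ((j : ℝ) + 1)) ∧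
      (L N ≤ j → j < K N → |rhoOf a (E N) j| ≤ C / (L N : ℝ)) ∧
      (K N ≤ j →
        |rhoOf a (E N) j| ≤
          C * (1 / ((N : ℝ) - (j : ℝ)) + a ^ (-((N : ℝ) - (j : ℝ)))))) ∧
    (Tendsto (fun N => (L N : ℝ)) atTop atTop → ∀ j : ℕ → ℕ,
      Tendsto (fun N : ℕ => (N : ℝ) - (j N : ℝ)) atTop atTop →
      Tendsto (fun N => rhoOf a (E N) (j N)) atTop (nhds 0)) := by
  have ha0 : 0 < a := zero_lt_one.trans ha
  have hC : 0 < b * rhoConst a := mul_pos hb (rhoConst_pos ha)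
  have hpow : ∀ M j : ℕ, a ^ (-((M : ℝ) - (j : ℝ))) = a ^ j / a ^ M := fun M j => by
    rw [neg_sub, Real.rpow_sub ha0, Real.rpow_natCast, Real.rpow_natCast]
  refine ⟨⟨b * rhoConst a, hC, fun N hN j hjN => ?_⟩,
    fun hL j hj => tendsto_rhoOf_zero ha hLK hE hL hj⟩
  obtain ⟨hL, hle, hsum⟩ := hLK N hN
  refine ⟨fun hjL => ?_, fun hLj hjK => abs_rhoOf_le_of_le_of_lt ha hL hLj hjK (hE N),
    fun hKj => ?_⟩
  · rw [hpow]
    exact abs_rhoOf_le_of_lt ha hle hjL (hE N)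
  · refine (abs_rhoOf_le_of_ge ha hle hsum hKj hjN (hE N)).trans ?_
    rw [div_eq_mul_one_div]
    exact mul_le_mul_of_nonneg_left (le_add_of_nonneg_right (Real.rpow_nonneg ha0.le _)) hC.le

end Asymptotics

/-- bounds on `ρ_j(N)` and `ρ_{j(N)}(N) → 0` whenever `N - j(N) → ∞`. -/
theorem stmt_0 (a ξ φ α : ℝ) (ha : 1 < a) (hξ : ξ ∈ Set.Ioo 0 Real.pi)
    (hφ : φ ∈ Set.Ico 0 (2 * Real.pi)) (hα : α ∈ Set.Ioo (0 : ℝ) 1)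
    (L K : ℕ → ℕ)
    (hLK : ∀ N, 3 ≤ N → 1 < L N ∧ L N ≤ K N ∧ L N + K N = N + 1)
    (hlim : Tendsto (fun N : ℕ => (L N : ℝ) / (N : ℝ)) atTop (nhds α)) :
    (∃ C > (0 : ℝ), ∃ N₀ : ℕ, ∀ N, N₀ ≤ N → ∀ j, j < N →
      (j < L N →
        |rho a ξ φ (L N) (K N) j| ≤ C * a ^ (-((L N : ℝ) - (j : ℝ))) / ((j : ℝ) + 1)) ∧
      (L N ≤ j → j < K N →
        |rho a ξ φ (L N) (K N) j| ≤ C / (L N : ℝ)) ∧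
      (K N ≤ j →
        |rho a ξ φ (L N) (K N) j| ≤
          C * (1 / ((N : ℝ) - (j : ℝ)) + a ^ (-((N : ℝ) - (j : ℝ)))))) ∧
    (∀ j : ℕ → ℕ, (∀ N, j N < N) →
      Tendsto (fun N : ℕ => (N : ℝ) - (j N : ℝ)) atTop atTop →
      Tendsto (fun N : ℕ => rho a ξ φ (L N) (K N) (j N)) atTop (nhds 0)) := by
  simp only [rho_eq_rhoOf]
  obtain ⟨⟨C, hC, hbounds⟩, hzero⟩ := stmt_0_general ha one_pos
    (fun N hN => (hLK N hN).imp_left zero_lt_one.trans)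
    fun N => abs_hankelOf_cosNoise_le_one (L := L N) (K := K N) ξ φ
  exact ⟨⟨C, hC, 3, hbounds⟩, fun j _ =>
    hzero (tendsto_atTop_of_tendsto_div_pos hα.1 hlim tendsto_natCast_atTop_atTop) j⟩
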